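/- Let X be a length space, let Y be a nonempty subset of X, and let F : Y → ℝ be a Lipschitz function with inf_Y F > −∞. Then there exists an absolutely minimal (AM) extension u : X → ℝ of F. -/

import Mathlib

open Metric Set

noncomputable section

/-- The length of a continuous path: its total variation. -/
def pathLength {X : Type*} [MetricSpace X] {x y : X} (γ : Path x y) : ENNReal :=
  eVariationOn (fun t => γ t) (Set.univ : Set unitInterval)

/-- A metric space is a length space if the distance between any two points equals the
infimum of the lengths of continuous paths joining them. -/
def IsLengthSpace (X : Type*) [MetricSpace X] : Prop :=
  ∀ x y : X, edist x y = ⨅ γ : Path x y, pathLength γ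

/-- The (possibly infinite) Lipschitz constant of `u` on `S`:
`Lip_S u = sup {|u x - u y| / d(x,y) : x, y ∈ S, x ≠ y}`. -/
def lipOn {X : Type*} [MetricSpace X] (u : X → ℝ) (S : Set X) : ENNReal :=
  ⨆ (x : X) (_ : x ∈ S) (y : X) (_ : y ∈ S) (_ : x ≠ y),
    ENNReal.ofReal (|u x - u y| / dist x y)

/-- `u : X → ℝ` is an absolutely minimal (AM) extension of `F` prescribed on `Y`:
`u` is Lipschitz, `u = F` on `Y`, and `Lip_U u = Lip_{∂U} u` for every open `U ⊆ X \ Y`. -/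
def IsAMExtension {X : Type*} [MetricSpace X] (Y : Set X) (F u : X → ℝ) : Prop :=
  lipOn u Set.univ < ⊤ ∧ Set.EqOn u F Y ∧
    ∀ U : Set X, IsOpen U → U ⊆ Yᶜ → lipOn u U = lipOn u (frontier U)

/-- Almost-geodesics leaving an open set cross its frontier. -/
theorem exists_crossing {X : Type*} [MetricSpace X] (hX : IsLengthSpace X) {G : Set X}
    {x z : X} (hx : x ∈ G) (hz : z ∉ G) {ε : ℝ} (hε : 0 < ε) :
    ∃ w ∈ frontier G, dist x w + dist w z ≤ dist x z + ε := by
  have h1 : (⨅ γ : Path x z, pathLength γ) < ENNReal.ofReal (dist x z + ε) := by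
    rw [← hX x z, edist_dist]
    exact (ENNReal.ofReal_lt_ofReal_iff (by positivity)).2 (by linarith)
  obtain ⟨γ, hγ⟩ := iInf_lt_iff.1 h1
  obtain ⟨t, ht⟩ : (frontier (γ ⁻¹' G)).Nonempty := by
    rw [nonempty_frontier_iff]
    refine ⟨⟨0, by simpa using hx⟩, fun h => hz ?_⟩
    have : (1 : unitInterval) ∈ γ ⁻¹' G := h ▸ Set.mem_univ _
    simpa using this
  have hw : γ t ∈ frontier G := γ.continuous.frontier_preimage_subset G ht
  refine ⟨γ t, hw, ?_⟩
  have h2 : edist x (γ t) + edist (γ t) z ≤ pathLength γ := by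
    have e1 : edist x (γ t) ≤ eVariationOn (fun t => γ t) (Set.Iic t) := by
      have := eVariationOn.edist_le (fun t => γ t) (s := Set.Iic t) (x := 0) (y := t)
        (unitInterval.nonneg t) (le_refl t)
      simpa using this
    have e2 : edist (γ t) z ≤ eVariationOn (fun t => γ t) (Set.Ici t) := by
      have := eVariationOn.edist_le (fun t => γ t) (s := Set.Ici t) (x := t) (y := 1)
        (le_refl t) (unitInterval.le_one t)
      simpa using this
    have e3 := eVariationOn.add_le_union (fun t => γ t) (s := Set.Iic t) (t := Set.Ici t)
      (fun a ha b hb => le_trans ha hb)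
    exact (add_le_add e1 e2).trans (e3.trans (eVariationOn.mono _ (Set.subset_univ _)))
  have h3 := h2.trans hγ.le
  rw [edist_dist, edist_dist, ← ENNReal.ofReal_add dist_nonneg dist_nonneg] at h3
  exact (ENNReal.ofReal_le_ofReal_iff (by positivity)).1 h3

/-- A downward cone lies below an upward cone on an open set missing both vertices, if it does so
on the frontier. -/
theorem cone_comparison {X : Type*} [MetricSpace X] (hX : IsLengthSpace X) {G : Set X}
    {z z' : X} (hz : z ∉ G) (hz' : z' ∉ G) {a a' L L' : ℝ}
    (hL : 0 ≤ L) (hL' : 0 ≤ L')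
    (h : ∀ w ∈ frontier G, a - L * dist w z ≤ a' + L' * dist w z') :
    ∀ x ∈ G, a - L * dist x z ≤ a' + L' * dist x z' := by
  intro x hx
  apply le_of_forall_pos_le_add
  intro δ hδ
  set ε := δ / (L + L' + 1) with hε
  have hpos : 0 < L + L' + 1 := by positivity
  have hε0 : 0 < ε := by positivity
  have hεδ : ε * (L + L' + 1) = δ := by rw [hε]; field_simp
  rcases le_total L' L with hLL | hLL
  · obtain ⟨w, hw, hd⟩ := exists_crossing hX hx hz hε0
    have h1 := h w hw
    have h2 : dist w z' ≤ dist x w + dist x z' := by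
      rw [dist_comm x w]; exact dist_triangle _ _ _
    have h3 := mul_le_mul_of_nonneg_left h2 hL'
    have h4 := mul_le_mul_of_nonneg_left hd hL
    have h5 := mul_le_mul_of_nonneg_right hLL (dist_nonneg (x := x) (y := w))
    nlinarith [mul_nonneg hε0.le hL']
  · obtain ⟨w, hw, hd⟩ := exists_crossing hX hx hz' hε0
    have h1 := h w hw
    have h2 : dist w z ≤ dist x w + dist x z := by
      rw [dist_comm x w]; exact dist_triangle _ _ _
    have h3 := mul_le_mul_of_nonneg_left h2 hL
    have h4 := mul_le_mul_of_nonneg_left hd hL'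
    have h5 := mul_le_mul_of_nonneg_right hLL (dist_nonneg (x := x) (y := w))
    nlinarith [mul_nonneg hε0.le hL]

/-- Comparison with upward cones from above off the closed set `Y`. -/
def CompAbove {X : Type*} [MetricSpace X] (Y : Set X) (h : X → ℝ) : Prop :=
  ∀ V : Set X, IsOpen V → V ⊆ Yᶜ → ∀ z ∉ V, ∀ a L : ℝ, 0 ≤ L →
    (∀ w ∈ frontier V, h w ≤ a + L * dist w z) → ∀ x ∈ V, h x ≤ a + L * dist x z

/-- Comparison with downward cones from below off the closed set `Y`. -/
def CompBelow {X : Type*} [MetricSpace X] (Y : Set X) (h : X → ℝ) : Prop :=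
  ∀ V : Set X, IsOpen V → V ⊆ Yᶜ → ∀ z ∉ V, ∀ a L : ℝ, 0 ≤ L →
    (∀ w ∈ frontier V, a - L * dist w z ≤ h w) → ∀ x ∈ V, a - L * dist x z ≤ h x

theorem frontier_diff_singleton {X : Type*} [MetricSpace X] {U : Set X} (hU : IsOpen U) (x : X) :
    frontier (U \ {x}) ⊆ insert x (frontier U) := by
  intro p hp
  have ho : IsOpen (U \ {x}) := hU.sdiff isClosed_singleton
  rw [ho.frontier_eq] at hp
  rw [hU.frontier_eq]
  by_cases hpx : p = x
  · exact Or.inl hpx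
  · exact Or.inr ⟨closure_mono sdiff_subset hp.1, fun hpU => hp.2 ⟨hpU, hpx⟩⟩

/-- Perron's method. -/
theorem exists_perron {X : Type*} [MetricSpace X] (hX : IsLengthSpace X)
    {Y : Set X} (hYc : IsClosed Y) (hY : Y.Nonempty) {F : X → ℝ} {K : NNReal}
    (hF : LipschitzWith K F) :
    ∃ u : X → ℝ, LipschitzWith K u ∧ Set.EqOn u F Y ∧ CompAbove Y u ∧ CompBelow Y u := by
  have hFd : ∀ x y, F x ≤ F y + K * dist x y := fun x y => hF.le_add_mul x y
  set S : Set (X → ℝ) := {h | CompAbove Y h ∧ ∀ y ∈ Y, h y ≤ F y} with hS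
  have hK : (0 : ℝ) ≤ K := K.2
  have hcone : ∀ y ∈ Y, (fun x => F y - K * dist x y) ∈ S := by
    intro y hy
    refine ⟨?_, ?_⟩
    · intro V _ hVY z hz a L hL hfr
      exact cone_comparison hX (fun hyV => hVY hyV hy) hz hK hL hfr
    · intro x _
      have := hFd y x
      rw [dist_comm] at this
      simp only
      linarith
  have hupper : ∀ h ∈ S, ∀ y ∈ Y, ∀ x, h x ≤ F y + K * dist x y := by
    intro h hh y hy x
    by_cases hx : x ∈ Y
    · exact (hh.2 x hx).trans (hFd x y)
    · refine hh.1 Yᶜ hYc.isOpen_compl subset_rfl y (fun hn => hn hy) _ _ hK ?_ x hx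
      intro w hw
      rw [frontier_compl] at hw
      have hwY := hYc.frontier_subset hw
      exact (hh.2 w hwY).trans (hFd w y)
  obtain ⟨y0, hy0⟩ := hY
  have hSne : S.Nonempty := ⟨_, hcone y0 hy0⟩
  set u : X → ℝ := fun x => sSup ((fun h : X → ℝ => h x) '' S) with hu
  have hle : ∀ h ∈ S, ∀ x, h x ≤ u x := by
    intro h hh x
    refine le_csSup ⟨F y0 + K * dist x y0, ?_⟩ ⟨h, hh, rfl⟩
    rintro _ ⟨g, hg, rfl⟩
    exact hupper g hg y0 hy0 x
  have hsup : ∀ x b, (∀ h ∈ S, h x ≤ b) → u x ≤ b := by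
    intro x b hb
    refine csSup_le (hSne.image _) ?_
    rintro _ ⟨g, hg, rfl⟩
    exact hb g hg
  have huF : Set.EqOn u F Y := by
    intro y hy
    refine le_antisymm (hsup y _ fun h hh => hh.2 y hy) ?_
    have := hle _ (hcone y hy) y
    simpa using this
  have hCA : CompAbove Y u := by
    intro V hV hVY z hz a L hL hfr x hx
    refine hsup x _ fun h hh => hh.1 V hV hVY z hz a L hL ?_ x hx
    exact fun w hw => (hle h hh w).trans (hfr w hw)
  have hulip : LipschitzWith K u := by
    apply LipschitzWith.of_le_add_mul
    intro x y
    -- bound on the boundary set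
    have hYb : ∀ p ∈ Y, u p ≤ u y + K * dist p y := by
      intro p hp
      have := hle _ (hcone p hp) y
      rw [dist_comm] at this
      rw [huF hp]
      linarith
    by_cases hx : x ∈ Y
    · exact hYb x hx
    by_cases hxy : x = y
    · simp [hxy]
    refine hCA (Yᶜ \ {y}) (hYc.isOpen_compl.sdiff isClosed_singleton) sdiff_subset y
      (fun h => h.2 rfl) _ _ hK ?_ x ⟨hx, hxy⟩
    intro w hw
    rcases frontier_diff_singleton hYc.isOpen_compl y hw with rfl | hw
    · simp
    · rw [frontier_compl] at hw
      exact hYb w (hYc.frontier_subset hw)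
  refine ⟨u, hulip, huF, hCA, ?_⟩
  intro V hV hVY z hz a L hL hfr x1 hx1
  by_contra hlt
  push Not at hlt
  have hcc : Continuous (fun x => a - L * dist x z) := by fun_prop
  set c : X → ℝ := fun x => a - L * dist x z with hc
  set W : Set X := {x | x ∈ V ∧ u x < c x} with hW
  have hWo : IsOpen W := hV.inter (isOpen_lt hulip.continuous hcc)
  have hWfr : ∀ p ∈ frontier W, u p = c p := by
    intro p hp
    rw [hWo.frontier_eq] at hp
    have h1 : u p ≤ c p := by
      have : W ⊆ {x | u x ≤ c x} := fun x hx => hx.2.le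
      exact closure_minimal this (isClosed_le hulip.continuous hcc) hp.1
    by_cases hpV : p ∈ V
    · exact le_antisymm h1 (not_lt.1 fun h => hp.2 ⟨hpV, h⟩)
    · refine le_antisymm h1 (hfr p ?_)
      rw [hV.frontier_eq]
      exact ⟨closure_mono (fun x hx => hx.1) hp.1, hpV⟩
  classical
  set w : X → ℝ := fun x => if x ∈ W then c x else u x with hw
  have hwW : ∀ x ∈ W, w x = c x := fun x hx => by simp [hw, hx]
  have hwn : ∀ x, x ∉ W → w x = u x := fun x hx => by simp [hw, hx]
  have huw : ∀ x, u x ≤ w x := by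
    intro x
    by_cases hx : x ∈ W
    · rw [hwW x hx]; exact hx.2.le
    · rw [hwn x hx]
  have hwS : w ∈ S := by
    refine ⟨?_, ?_⟩
    · intro V' hV' hVY' z' hz' a' L' hL' hfr' x hx
      have hu1 : ∀ p ∈ V', u p ≤ a' + L' * dist p z' :=
        hCA V' hV' hVY' z' hz' a' L' hL' fun p hp => (huw p).trans (hfr' p hp)
      have hu2 : ∀ p ∈ closure V', u p ≤ a' + L' * dist p z' := fun p hp =>
        closure_minimal (t := {p | u p ≤ a' + L' * dist p z'}) hu1
          (isClosed_le hulip.continuous (by fun_prop)) hp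
      by_cases hxW : x ∈ W
      · rw [hwW x hxW]
        refine cone_comparison hX (G := W ∩ V') (fun h => hz h.1.1) (fun h => hz' h.2) hL hL' ?_
          x ⟨hxW, hx⟩
        intro p hp
        rw [(hWo.inter hV').frontier_eq] at hp
        have hpW : p ∈ closure W := closure_mono inter_subset_left hp.1
        have hpV : p ∈ closure V' := closure_mono inter_subset_right hp.1
        by_cases hpW' : p ∈ W
        · have : p ∈ frontier V' := by
            rw [hV'.frontier_eq]; exact ⟨hpV, fun h => hp.2 ⟨hpW', h⟩⟩
          have := hfr' p this
          rwa [hwW p hpW'] at this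
        · have h1 : p ∈ frontier W := by
            rw [hWo.frontier_eq]; exact ⟨hpW, hpW'⟩
          have h2 := hWfr p h1
          have h3 := hu2 p hpV
          rwa [h2] at h3
      · rw [hwn x hxW]; exact hu1 x hx
    · intro y hy
      rw [hwn y (fun h => hVY h.1 hy), huF hy]
  have hx1W : x1 ∈ W := ⟨hx1, hlt⟩
  have := hle w hwS x1
  rw [hwW x1 hx1W] at this
  exact absurd hlt (not_lt.2 this)

theorem lipOn_le_iff {X : Type*} [MetricSpace X] (u : X → ℝ) (S : Set X) (L : NNReal) :
    lipOn u S ≤ L ↔ ∀ x ∈ S, ∀ y ∈ S, |u x - u y| ≤ L * dist x y := by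
  simp only [lipOn, iSup_le_iff]
  constructor
  · intro h x hx y hy
    by_cases hxy : x = y
    · simp [hxy]
    · have h1 := h x hx y hy hxy
      rw [← ENNReal.ofReal_coe_nnreal] at h1
      have h2 := (ENNReal.ofReal_le_ofReal_iff L.2).1 h1
      exact (div_le_iff₀ (dist_pos.2 hxy)).1 h2
  · intro h x hx y hy hxy
    rw [← ENNReal.ofReal_coe_nnreal]
    apply ENNReal.ofReal_le_ofReal
    rw [div_le_iff₀ (dist_pos.2 hxy)]
    exact h x hx y hy

/-- Every Lipschitz function `F` on a nonempty subset `Y` of a length space `X` that is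
bounded below admits an absolutely minimal extension to `X`. -/
theorem stmt1 {X : Type*} [MetricSpace X] (hX : IsLengthSpace X)
    (Y : Set X) (hY : Y.Nonempty) (F : X → ℝ)
    (hFlip : ∃ K : NNReal, LipschitzOnWith K F Y)
    (hFbelow : ∃ m : ℝ, ∀ y ∈ Y, m ≤ F y) :
    ∃ u : X → ℝ, IsAMExtension Y F u := by
  obtain ⟨K, hK⟩ := hFlip
  obtain ⟨F', hF', hFF'⟩ := hK.extend_real
  obtain ⟨u, hu, huF, hCA, hCB⟩ := exists_perron hX (isClosed_closure (s := Y)) hY.closure hF'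
  have hKlip : ∀ S : Set X, lipOn u S ≤ K := fun S =>
    (lipOn_le_iff u S K).2 fun x _ y _ => by
      have := hu.dist_le_mul x y
      rwa [Real.dist_eq] at this
  have hfin : ∀ S : Set X, ∃ L : NNReal, (L : ENNReal) = lipOn u S := fun S =>
    ⟨_, ENNReal.coe_toNNReal ((hKlip S).trans_lt ENNReal.coe_lt_top).ne⟩
  refine ⟨u, (hKlip _).trans_lt ENNReal.coe_lt_top,
    fun y hy => (huF (subset_closure hy)).trans (hFF' hy).symm, ?_⟩
  intro U hU hUY
  have hUY' : U ⊆ (closure Y)ᶜ := by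
    have : closure Y ⊆ Uᶜ := closure_minimal (subset_compl_comm.1 hUY) hU.isClosed_compl
    exact subset_compl_comm.1 this
  apply le_antisymm
  · obtain ⟨L, hL⟩ := hfin (frontier U)
    rw [← hL, lipOn_le_iff]
    have hb := (lipOn_le_iff u (frontier U) L).1 hL.ge
    -- step one: cone bounds with vertex on the frontier
    have h1 : ∀ x ∈ U, ∀ z ∈ frontier U, u z ≤ u x + L * dist z x := by
      intro x hx z hz
      have hzU : z ∉ U := by rw [hU.frontier_eq] at hz; exact hz.2
      have := hCB U hU hUY' z hzU (u z) L L.2 (fun w hw => by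
        have := (abs_le.1 (hb w hw z hz)).1
        linarith) x hx
      rw [dist_comm]
      linarith
    have h2 : ∀ x ∈ U, ∀ y ∈ U, u y ≤ u x + L * dist y x := by
      intro x hx y hy
      by_cases hyx : y = x
      · simp [hyx]
      refine hCA (U \ {x}) (hU.sdiff isClosed_singleton) (sdiff_subset.trans hUY') x
        (fun h => h.2 rfl) _ _ L.2 ?_ y ⟨hy, hyx⟩
      intro w hw
      rcases frontier_diff_singleton hU x hw with rfl | hw
      · simp
      · exact h1 x hx w hw
    intro x hx y hy
    have a1 := h2 x hx y hy
    have a2 := h2 y hy x hx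
    rw [dist_comm] at a1
    exact abs_le.2 ⟨by linarith, by linarith⟩
  · obtain ⟨L, hL⟩ := hfin U
    rw [← hL, lipOn_le_iff]
    have hb := (lipOn_le_iff u U L).1 hL.ge
    have hcl : IsClosed {p : X × X | |u p.1 - u p.2| ≤ L * dist p.1 p.2} := by
      have := hu.continuous
      exact isClosed_le (by fun_prop) (by fun_prop)
    have hsub : closure (U ×ˢ U) ⊆ {p : X × X | |u p.1 - u p.2| ≤ L * dist p.1 p.2} :=
      closure_minimal (fun p hp => hb p.1 hp.1 p.2 hp.2) hcl
    intro x hx y hy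
    rw [closure_prod_eq] at hsub
    exact hsub (Set.mk_mem_prod (frontier_subset_closure hx) (frontier_subset_closure hy))

end
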